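/- Let p ∈ ℕ and f ∈ Ω_w(A*, p) ∪ Ω(A*, p). Then there exists a constant C′ > 0 such that for any I, J ∈ A* there exists an integer N = N(I, J) with Σ_{i=0}^p Σ_{K ∈ A^{n+i}} f*(IKJ) ≥ C′ f*(I) f*(J) for all n ≥ N. Moreover, if f ∈ Ω(A*, p), then Σ_{K ∈ A^n} f*(IKJ) ≥ C′ f*(I) f*(J) for all n ≥ N. -/

import Mathlib

open MeasureTheory Filter Topology
open scoped Classical ENNReal NNReal

noncomputable section

/-- The left shift on one-sided sequences. -/
def shiftMap {A : Type} : (ℕ → A) → (ℕ → A) := fun x n => x (n + 1)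

/-- The cylinder set of a finite word. -/
def cyl {A : Type} (I : List A) : Set (ℕ → A) :=
  {x | ∀ i : Fin I.length, x i = I.get i}

/-- Membership of a word in the language of `X`. -/
def Lang {A : Type} (X : Set (ℕ → A)) (I : List A) : Prop :=
  (cyl I ∩ X).Nonempty

/-- `X` is a (nonempty) one-sided subshift. -/
def IsSubshift {A : Type} [TopologicalSpace A] (X : Set (ℕ → A)) : Prop :=
  X.Nonempty ∧ IsCompact X ∧ shiftMap '' X ⊆ X

/-- weak `p`-specification -/
def WeakSpecification {A : Type} (X : Set (ℕ → A)) (p : ℕ) : Prop :=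
  ∀ I J : List A, Lang X I → Lang X J →
    ∃ K : List A, K.length ≤ p ∧ Lang X (I ++ K ++ J)

/-- `p`-specification -/
def Specification {A : Type} (X : Set (ℕ → A)) (p : ℕ) : Prop :=
  ∀ I J : List A, Lang X I → Lang X J →
    ∃ K : List A, K.length = p ∧ Lang X (I ++ K ++ J)

/-- invariant probability measures supported on `X` (predicate on plain measures) -/
def InvOn {A : Type} [MeasurableSpace A] (X : Set (ℕ → A)) (μ : Measure (ℕ → A)) : Prop :=
  IsProbabilityMeasure μ ∧ μ.map shiftMap = μ ∧ μ X = 1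

/-- the set of shift-invariant probability measures on `X` -/
def MInv {A : Type} [MeasurableSpace A] (X : Set (ℕ → A)) :
    Set (ProbabilityMeasure (ℕ → A)) :=
  {μ | (μ : Measure (ℕ → A)).map shiftMap = (μ : Measure (ℕ → A)) ∧
    (μ : Measure (ℕ → A)) X = 1}

/-- measure of a word: `μ([I] ∩ X)` -/
def mw {A : Type} [MeasurableSpace A] (X : Set (ℕ → A)) (μ : Measure (ℕ → A))
    (I : List A) : ℝ :=
  (μ (cyl I ∩ X)).toReal

/-- the initial word of length `n` of a sequence -/
def wordOf {A : Type} (x : ℕ → A) (n : ℕ) : List A := List.ofFn (fun i : Fin n => x i)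

/-- `n`-block entropy -/
def Hblock {A : Type} [Fintype A] [MeasurableSpace A] (X : Set (ℕ → A))
    (μ : Measure (ℕ → A)) (n : ℕ) : ℝ :=
  -∑ w : Fin n → A, mw X μ (List.ofFn w) * Real.log (mw X μ (List.ofFn w))

/-- measure-theoretic entropy (the limit exists for invariant measures; `liminf` realizes it) -/
def ent {A : Type} [Fintype A] [MeasurableSpace A] (X : Set (ℕ → A))
    (μ : Measure (ℕ → A)) : ℝ :=
  liminf (fun n : ℕ => Hblock X μ n / n) atTop

/-- extended logarithm: `log t`, with value `⊥` for `t ≤ 0` -/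
def elog (t : ℝ) : EReal := if t ≤ 0 then ⊥ else ((Real.log t : ℝ) : EReal)

/-- the integral `∫ log g dμ`, valued in `ℝ ∪ {−∞}` -/
def intlog {Ω : Type*} [MeasurableSpace Ω] (μ : Measure Ω) (g : Ω → ℝ) : EReal :=
  ((∫⁻ x, ENNReal.ofReal (Real.log (g x)) ∂μ : ℝ≥0∞) : EReal) -
    ((∫⁻ x, (if g x ≤ 0 then (⊤ : ℝ≥0∞) else ENNReal.ofReal (-Real.log (g x))) ∂μ : ℝ≥0∞) : EReal)

/-- sub-additive potential `Φ = (log φ_n)_{n ≥ 1}` -/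
def SubaddPot {A : Type} [TopologicalSpace A] (X : Set (ℕ → A))
    (φ : ℕ → (ℕ → A) → ℝ) : Prop :=
  (∀ n, 1 ≤ n → ContinuousOn (φ n) X) ∧
  (∀ n, 1 ≤ n → ∀ x ∈ X, 0 ≤ φ n x) ∧
  ∃ c > (0:ℝ), ∀ n m : ℕ, 1 ≤ n → 1 ≤ m → ∀ x ∈ X,
    φ (n + m) x ≤ c * φ n x * φ m (shiftMap^[n] x)

/-- `Φ_*(μ) = lim (1/n) ∫ log φ_n dμ` (realized as a `liminf` in `EReal`) -/
def PhiStar {A : Type} [MeasurableSpace A] (μ : Measure (ℕ → A))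
    (φ : ℕ → (ℕ → A) → ℝ) : EReal :=
  liminf (fun n : ℕ => (((n : ℝ)⁻¹ : ℝ) : EReal) * intlog μ (φ n)) atTop

/-- sub-multiplicative function on the language of `X` -/
def Submult {A : Type} (X : Set (ℕ → A)) (φ : List A → ℝ) : Prop :=
  (∀ I, Lang X I → 0 ≤ φ I) ∧ φ [] = 1 ∧
  ∃ c > (0:ℝ), ∀ I J : List A, Lang X (I ++ J) → φ (I ++ J) ≤ c⁻¹ * φ I * φ J

/-- the potential generated by a word function -/
def genPot {A : Type} (φ : List A → ℝ) : ℕ → (ℕ → A) → ℝ := fun n x => φ (wordOf x n)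

/-- the scaled potential `cΦ = (log φ_n^c)` -/
def scPot {Ω : Type*} (c : ℝ) (φ : ℕ → Ω → ℝ) : ℕ → Ω → ℝ := fun n x => φ n x ^ c

/-- the "pressure value" `Φ_*(μ) + h_μ` -/
def eqVal {A : Type} [Fintype A] [MeasurableSpace A] (X : Set (ℕ → A))
    (φ : ℕ → (ℕ → A) → ℝ) (μ : ProbabilityMeasure (ℕ → A)) : EReal :=
  PhiStar (μ : Measure (ℕ → A)) φ + ((ent X (μ : Measure (ℕ → A)) : ℝ) : EReal)

/-- the set of equilibrium states of `Φ` -/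
def EqSet {A : Type} [Fintype A] [MeasurableSpace A] (X : Set (ℕ → A))
    (φ : ℕ → (ℕ → A) → ℝ) : Set (ProbabilityMeasure (ℕ → A)) :=
  {μ | μ ∈ MInv X ∧ eqVal X φ μ = ⨆ η ∈ MInv X, eqVal X φ η}

/-- sequence map induced by a one-block map -/
def blockMap {A B : Type} (π : A → B) : (ℕ → A) → (ℕ → B) := fun x n => π (x n)

/-- pushforward of a probability measure under a one-block map -/
def pushM {A B : Type} [MeasurableSpace A] [MeasurableSpace B] (π : A → B)
    (μ : ProbabilityMeasure (ℕ → A)) : Measure (ℕ → B) :=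
  (μ : Measure (ℕ → A)).map (blockMap π)

/-- conditional equilibrium states of `Φ` over `ν` -/
def CondEqSet {A B : Type} [Fintype A] [MeasurableSpace A] [MeasurableSpace B]
    (X : Set (ℕ → A)) (π : A → B) (φ : ℕ → (ℕ → A) → ℝ) (ν : Measure (ℕ → B)) :
    Set (ProbabilityMeasure (ℕ → A)) :=
  {μ | μ ∈ MInv X ∧ pushM π μ = ν ∧
    eqVal X φ μ = ⨆ η ∈ {η | η ∈ MInv X ∧ pushM π η = ν}, eqVal X φ η}

/-- the projected word function `ψ(J) = Σ_{I : πI = J} φ(I)` -/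
def psiProj {A B : Type} [Fintype A] (X : Set (ℕ → A)) (π : A → B) (φ : List A → ℝ)
    (J : List B) : ℝ :=
  ∑ w : Fin J.length → A,
    if Lang X (List.ofFn w) ∧ List.map π (List.ofFn w) = J then φ (List.ofFn w) else 0

/-- `φ^{(2)}(J) = (Σ_{I : πI = J} φ(I)^{1/a₁})^{a₁}` -/
def phiTwo {A B : Type} [Fintype A] (X : Set (ℕ → A)) (π : A → B) (φ : List A → ℝ)
    (a₁ : ℝ) (J : List B) : ℝ :=
  (∑ w : Fin J.length → A,
    if Lang X (List.ofFn w) ∧ List.map π (List.ofFn w) = J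
    then φ (List.ofFn w) ^ a₁⁻¹ else 0) ^ a₁

/-- `a`-weighted pressure value for `k = 2` -/
def wVal2 {A B : Type} [Fintype A] [Fintype B] [MeasurableSpace A] [MeasurableSpace B]
    (X : Set (ℕ → A)) (Y : Set (ℕ → B)) (π : A → B) (φ : ℕ → (ℕ → A) → ℝ)
    (a₁ a₂ : ℝ) (μ : ProbabilityMeasure (ℕ → A)) : EReal :=
  PhiStar (μ : Measure (ℕ → A)) φ +
    ((a₁ * ent X (μ : Measure (ℕ → A)) + a₂ * ent Y (pushM π μ) : ℝ) : EReal)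

/-- the set of `a`-weighted equilibrium states, `k = 2` -/
def WEqSet2 {A B : Type} [Fintype A] [Fintype B] [MeasurableSpace A] [MeasurableSpace B]
    (X : Set (ℕ → A)) (Y : Set (ℕ → B)) (π : A → B) (φ : ℕ → (ℕ → A) → ℝ)
    (a₁ a₂ : ℝ) : Set (ProbabilityMeasure (ℕ → A)) :=
  {μ | μ ∈ MInv X ∧ wVal2 X Y π φ a₁ a₂ μ = ⨆ η ∈ MInv X, wVal2 X Y π φ a₁ a₂ η}

/-- convexity of a set of probability measures -/
def ConvexPM {Ω : Type*} [MeasurableSpace Ω] (S : Set (ProbabilityMeasure Ω)) : Prop :=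
  ∀ μ₁ ∈ S, ∀ μ₂ ∈ S, ∀ t : ℝ, 0 ≤ t → t ≤ 1 → ∀ μ : ProbabilityMeasure Ω,
    (μ : Measure Ω) = ENNReal.ofReal t • (μ₁ : Measure Ω) +
      ENNReal.ofReal (1 - t) • (μ₂ : Measure Ω) → μ ∈ S

/-- extreme points of a set of probability measures -/
def IsExtremePM {Ω : Type*} [MeasurableSpace Ω] (S : Set (ProbabilityMeasure Ω))
    (μ : ProbabilityMeasure Ω) : Prop :=
  μ ∈ S ∧ ∀ μ₁ ∈ S, ∀ μ₂ ∈ S, ∀ t : ℝ, 0 < t → t < 1 →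
    (μ : Measure Ω) = ENNReal.ofReal t • (μ₁ : Measure Ω) +
      ENNReal.ofReal (1 - t) • (μ₂ : Measure Ω) → μ₁ = μ₂

/-- the class `Ω_w(A*, p)` -/
def OmegaW {A : Type} [Fintype A] (p : ℕ) (f : List A → ℝ) : Prop :=
  (∀ I, 0 ≤ f I ∧ f I ≤ 1) ∧
  ∃ c > (0:ℝ),
    (∀ n : ℕ, ∑ w : Fin n → A, f (List.ofFn w) = 1) ∧
    (∀ I J : List A, ∃ K : List A, K.length ≤ p ∧ c * (f I * f J) ≤ f (I ++ K ++ J)) ∧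
    (∀ I : List A, ∃ i j : A, c * f I ≤ f (i :: I) ∧ c * f I ≤ f (I ++ [j]))

/-- the class `Ω(A*, p)` -/
def OmegaS {A : Type} [Fintype A] (p : ℕ) (f : List A → ℝ) : Prop :=
  (∀ I, 0 ≤ f I ∧ f I ≤ 1) ∧
  ∃ c > (0:ℝ),
    (∀ n : ℕ, ∑ w : Fin n → A, f (List.ofFn w) = 1) ∧
    (∀ I J : List A, ∃ K : List A, K.length = p ∧ c * (f I * f J) ≤ f (I ++ K ++ J))

/-- `f_{m,n}(I)` -/
def fmn {A : Type} [Fintype A] (f : List A → ℝ) (m n : ℕ) (I : List A) : ℝ :=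
  ∑ u : Fin m → A, ∑ v : Fin n → A, f (List.ofFn u ++ I ++ List.ofFn v)

/-- `f*(I) = sup_{m,n} f_{m,n}(I)` -/
def fstar {A : Type} [Fintype A] (f : List A → ℝ) (I : List A) : ℝ :=
  ⨆ m : ℕ, ⨆ n : ℕ, fmn f m n I

/-- the class `D_w(X, p)` -/
def Dw {A : Type} (X : Set (ℕ → A)) (p : ℕ) (φ : List A → ℝ) : Prop :=
  (∀ I, Lang X I → 0 ≤ φ I) ∧ (∃ I, Lang X I ∧ I ≠ [] ∧ 0 < φ I) ∧
  ∃ c : ℝ, 0 < c ∧ c ≤ 1 ∧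
    (∀ I J : List A, Lang X (I ++ J) → φ (I ++ J) ≤ c⁻¹ * φ I * φ J) ∧
    (∀ I J : List A, Lang X I → Lang X J →
      ∃ K : List A, K.length ≤ p ∧ Lang X (I ++ K ++ J) ∧
        c * (φ I * φ J) ≤ φ (I ++ K ++ J))

/-- the class `D(X, p)` -/
def Ds {A : Type} (X : Set (ℕ → A)) (p : ℕ) (φ : List A → ℝ) : Prop :=
  (∀ I, Lang X I → 0 ≤ φ I) ∧ (∃ I, Lang X I ∧ I ≠ [] ∧ 0 < φ I) ∧
  ∃ c : ℝ, 0 < c ∧ c ≤ 1 ∧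
    (∀ I J : List A, Lang X (I ++ J) → φ (I ++ J) ≤ c⁻¹ * φ I * φ J) ∧
    (∀ I J : List A, Lang X I → Lang X J →
      ∃ K : List A, K.length = p ∧ Lang X (I ++ K ++ J) ∧
        c * (φ I * φ J) ≤ φ (I ++ K ++ J))

end

noncomputable section

/-- iterated one-block maps along a chain of alphabets: `tauFrom π j i : B j → B (j+i)` -/
def tauFrom {B : ℕ → Type} (π : ∀ i, B i → B (i+1)) (j : ℕ) : (i : ℕ) → B j → B (j + i)
  | 0 => id
  | (i+1) => fun a => π (j + i) (tauFrom π j i a)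

/-- weighted pressure value along a chain starting at index `j`, with `k` weights `w 0, …, w (k-1)` -/
def wValGen {B : ℕ → Type} [∀ i, Fintype (B i)] [∀ i, MeasurableSpace (B i)]
    (π : ∀ i, B i → B (i+1)) (X : ∀ i, Set (ℕ → B i)) (j k : ℕ) (w : ℕ → ℝ)
    (φ : ℕ → (ℕ → B j) → ℝ) (μ : ProbabilityMeasure (ℕ → B j)) : EReal :=
  PhiStar (μ : Measure (ℕ → B j)) φ +
    ((∑ i ∈ Finset.range k, w i *
      ent (X (j + i)) ((μ : Measure (ℕ → B j)).map (blockMap (tauFrom π j i))) : ℝ) : EReal)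

/-- weighted equilibrium states along a chain -/
def wEqSetGen {B : ℕ → Type} [∀ i, Fintype (B i)] [∀ i, MeasurableSpace (B i)]
    (π : ∀ i, B i → B (i+1)) (X : ∀ i, Set (ℕ → B i)) (j k : ℕ) (w : ℕ → ℝ)
    (φ : ℕ → (ℕ → B j) → ℝ) : Set (ProbabilityMeasure (ℕ → B j)) :=
  {μ | μ ∈ MInv (X j) ∧
    wValGen π X j k w φ μ = ⨆ η ∈ MInv (X j), wValGen π X j k w φ η}

end

/-!
Choose `m, a` and `m', n` with `f_{m,a}(I) ≥ f*(I) / 2` and `f_{m',n}(J) ≥ f*(J) / 2`. Since the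
weights of each length sum to `1`, inserting an arbitrary word to the left of `J` and bridging it to
`J` costs only a constant factor, so `f_{b,n}(J)` stays comparable to `f*(J)` for all large `b`.
Under (H2) alone this controls only some `b` in each window of `p + 1` consecutive lengths;
one-letter extensions (H3) move the mass within the window. Bridging the words counted by
`f_{m,a}(I)` to those counted by `f_{b,n}(J)` then yields words `u I K J v` with `|u| = m`,
`|v| = n` and `|K| = a + i + b`, where `i` is the length of the bridge, and summing over `u` and `v`
gives `f_{m,n}(IKJ) ≤ f*(IKJ)`.
-/

section WordSum

variable {A M : Type*} [Fintype A]

/-- The sum of `g` over `A^n`. Words of length `n` are enumerated as functions `Fin n → A`, as in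
the definition of `fmn`. -/
def wordSum [AddCommMonoid M] (n : ℕ) (g : List A → M) : M :=
  ∑ w : Fin n → A, g (List.ofFn w)

section AddCommMonoid

variable [AddCommMonoid M]

lemma wordSum_add (m n : ℕ) (g : List A → M) :
    wordSum (m + n) g = wordSum m fun u => wordSum n fun v => g (u ++ v) := by
  simp only [wordSum]
  rw [← Fintype.sum_prod_type', ← (Fin.appendEquiv m n).sum_comp]
  simp [Fin.appendEquiv, List.ofFn_fin_append]

lemma wordSum_comm (m n : ℕ) (g : List A → List A → M) :
    (wordSum m fun u => wordSum n fun v => g u v) = wordSum n fun v => wordSum m fun u => g u v :=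
  Finset.sum_comm

lemma wordSum_finsetSum {ι : Type*} (n : ℕ) (s : Finset ι) (g : ι → List A → M) :
    (wordSum n fun I => ∑ i ∈ s, g i I) = ∑ i ∈ s, wordSum n (g i) :=
  Finset.sum_comm

variable [PartialOrder M] [IsOrderedAddMonoid M]

lemma wordSum_le_wordSum {n : ℕ} {g h : List A → M} (H : ∀ I, g I ≤ h I) :
    wordSum n g ≤ wordSum n h :=
  Finset.sum_le_sum fun _ _ => H _

lemma wordSum_nonneg {n : ℕ} {g : List A → M} (H : ∀ I, 0 ≤ g I) : 0 ≤ wordSum n g :=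
  Finset.sum_nonneg fun _ _ => H _

lemma le_wordSum_length (K : List A) {g : List A → M} (H : ∀ I, 0 ≤ g I) :
    g K ≤ wordSum K.length g := by
  simpa [wordSum] using Finset.single_le_sum (f := fun w : Fin K.length → A => g (List.ofFn w))
    (fun _ _ => H _) (Finset.mem_univ K.get)

end AddCommMonoid

variable [NonUnitalNonAssocSemiring M]

lemma mul_wordSum (n : ℕ) (c : M) (g : List A → M) :
    c * wordSum n g = wordSum n fun I => c * g I :=
  Finset.mul_sum ..

lemma wordSum_mul (n : ℕ) (g : List A → M) (c : M) :
    wordSum n g * c = wordSum n fun I => g I * c :=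
  Finset.sum_mul ..

end WordSum

/-- Nonnegative weights on words that form a probability vector on each `A^n`; no consistency
between different lengths is required. This is condition (H1) = (A1). -/
structure IsWordDistribution {A : Type*} [Fintype A] (f : List A → ℝ) : Prop where
  nonneg : ∀ I, 0 ≤ f I
  wordSum_eq_one : ∀ n, wordSum n f = 1

/-- Any two words can be joined by words with lengths in `P`, up to a constant factor in the
`f`-weight. Conditions (H2) and (A2) yield it for `P = {0, …, p}` and `P = {p}`; only the total
weight of the bridges is recorded. -/
def Bridging {A : Type*} [Fintype A] (P : Finset ℕ) (f : List A → ℝ) : Prop :=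
  ∃ c > 0, ∀ I J, c * (f I * f J) ≤ ∑ i ∈ P, wordSum i fun K => f (I ++ K ++ J)

/-- The words of length `k` inserted to the left of `I` retain a fixed proportion of the weight
of `I`, uniformly in `I` and in all large `k`. -/
def LeftExtendable {A : Type*} [Fintype A] (f : List A → ℝ) : Prop :=
  ∃ D > 0, ∀ᶠ k in atTop, ∀ I, D * f I ≤ wordSum k fun v => f (v ++ I)

section Extension

variable {A : Type*} [Fintype A] {f : List A → ℝ} {P Q : Finset ℕ} {p : ℕ}

lemma bridging_of_exists (h0 : ∀ I, 0 ≤ f I)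
    (h : ∃ c > 0, ∀ I J, ∃ K : List A, K.length ∈ P ∧ c * (f I * f J) ≤ f (I ++ K ++ J)) :
    Bridging P f := by
  obtain ⟨c, hc, h⟩ := h
  refine ⟨c, hc, fun I J => ?_⟩
  obtain ⟨K, hKP, hK⟩ := h I J
  calc c * (f I * f J) ≤ f (I ++ K ++ J) := hK
    _ ≤ wordSum K.length fun K => f (I ++ K ++ J) :=
      le_wordSum_length K (g := fun K => f (I ++ K ++ J)) fun _ => h0 _
    _ ≤ ∑ i ∈ P, wordSum i fun K => f (I ++ K ++ J) :=
      Finset.single_le_sum (f := fun i => wordSum i fun K => f (I ++ K ++ J))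
        (fun _ _ => wordSum_nonneg fun _ => h0 _) hKP

lemma Bridging.mono (hb : Bridging P f) (h0 : ∀ I, 0 ≤ f I) (hPQ : P ⊆ Q) : Bridging Q f := by
  obtain ⟨c, hc, hb⟩ := hb
  exact ⟨c, hc, fun I J => (hb I J).trans <|
    Finset.sum_le_sum_of_subset_of_nonneg hPQ fun _ _ _ => wordSum_nonneg fun _ => h0 _⟩

lemma Bridging.exists_mul_le_sum_wordSum_append (hb : Bridging P f) (hf : IsWordDistribution f) :
    ∃ c > 0, ∀ n I, c * f I ≤ ∑ i ∈ P, wordSum (n + i) fun v => f (v ++ I) := by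
  obtain ⟨c, hc, hb⟩ := hb
  refine ⟨c, hc, fun n I => ?_⟩
  calc c * f I = wordSum n fun J => c * (f J * f I) := by
        rw [← mul_wordSum, ← wordSum_mul, hf.wordSum_eq_one, one_mul]
    _ ≤ wordSum n fun J => ∑ i ∈ P, wordSum i fun K => f (J ++ K ++ I) :=
      wordSum_le_wordSum fun J => hb J I
    _ = ∑ i ∈ P, wordSum (n + i) fun v => f (v ++ I) := by
      simp only [wordSum_finsetSum, wordSum_add]

lemma Bridging.leftExtendable (hb : Bridging {p} f) (hf : IsWordDistribution f) :
    LeftExtendable f := by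
  obtain ⟨c, hc, h⟩ := hb.exists_mul_le_sum_wordSum_append hf
  refine ⟨c, hc, ?_⟩
  rw [← map_add_atTop_eq_nat p, eventually_map]
  exact .of_forall fun n I => by simpa only [Finset.sum_singleton] using h n I

lemma pow_mul_sum_range_le {d : ℝ} (hd : 0 ≤ d) (hd1 : d ≤ 1) {G : ℕ → ℝ} (hG0 : ∀ n, 0 ≤ G n)
    (hG : ∀ n, d * G n ≤ G (n + 1)) (p n : ℕ) :
    d ^ p * ∑ i ∈ Finset.range (p + 1), G (n + i) ≤ (p + 1) * G (n + p) := by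
  have term_le : ∀ i ∈ Finset.range (p + 1), d ^ p * G (n + i) ≤ G (n + p) := fun i hi => by
    obtain ⟨j, rfl⟩ := Nat.exists_eq_add_of_le (Finset.mem_range_succ_iff.1 hi)
    calc d ^ (i + j) * G (n + i) ≤ d ^ j * G (n + i) :=
          mul_le_mul_of_nonneg_right (pow_le_pow_of_le_one hd hd1 (by lia)) (hG0 _)
      _ ≤ G (n + (i + j)) := by
          simpa only [add_assoc, add_zero] using
            geom_le (u := fun j => G (n + i + j)) hd j fun k _ => hG (n + i + k)
  rw [Finset.mul_sum]
  simpa using Finset.sum_le_card_nsmul _ _ _ term_le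

lemma exists_mul_wordSum_append_le_succ (h0 : ∀ I, 0 ≤ f I)
    (h : ∃ c > 0, ∀ I, ∃ i, c * f I ≤ f (i :: I)) :
    ∃ d > 0, d ≤ 1 ∧ ∀ n I,
      (d * wordSum n fun v => f (v ++ I)) ≤ wordSum (n + 1) fun v => f (v ++ I) := by
  obtain ⟨c, hc, h⟩ := h
  refine ⟨min c 1, lt_min hc one_pos, min_le_right _ _, fun n I => ?_⟩
  rw [mul_wordSum, add_comm, wordSum_add, wordSum_comm]
  refine wordSum_le_wordSum fun v => ?_
  obtain ⟨i, hi⟩ := h (v ++ I)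
  calc min c 1 * f (v ++ I) ≤ c * f (v ++ I) :=
        mul_le_mul_of_nonneg_right (min_le_left _ _) (h0 _)
    _ ≤ f ([i] ++ v ++ I) := hi
    _ ≤ wordSum 1 fun u => f (u ++ v ++ I) :=
      le_wordSum_length [i] (g := fun u => f (u ++ v ++ I)) fun _ => h0 _

lemma Bridging.leftExtendable_of_exists_cons (hb : Bridging (Finset.range (p + 1)) f)
    (hf : IsWordDistribution f) (h : ∃ c > 0, ∀ I, ∃ i, c * f I ≤ f (i :: I)) :
    LeftExtendable f := by
  obtain ⟨c, hc, hsum⟩ := hb.exists_mul_le_sum_wordSum_append hf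
  obtain ⟨d, hd, hd1, hstep⟩ := exists_mul_wordSum_append_le_succ hf.nonneg h
  refine ⟨d ^ p * c / (p + 1), by positivity, ?_⟩
  rw [← map_add_atTop_eq_nat p, eventually_map]
  refine .of_forall fun n I => ?_
  rw [div_mul_eq_mul_div, div_le_iff₀' (by positivity), mul_assoc]
  calc d ^ p * (c * f I)
      ≤ d ^ p * ∑ i ∈ Finset.range (p + 1), wordSum (n + i) fun v => f (v ++ I) :=
        mul_le_mul_of_nonneg_left (hsum n I) (by positivity)
    _ ≤ (p + 1) * wordSum (n + p) fun v => f (v ++ I) :=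
        pow_mul_sum_range_le hd.le hd1 (fun _ => wordSum_nonneg fun _ => hf.nonneg _)
          (fun k => hstep k I) p n

end Extension

section Fstar

variable {A : Type} [Fintype A] {f : List A → ℝ} {P : Finset ℕ}

lemma fmn_eq_wordSum (f : List A → ℝ) (m n : ℕ) (I : List A) :
    fmn f m n I = wordSum m fun u => wordSum n fun v => f (u ++ I ++ v) :=
  rfl

lemma fmn_nonneg (h0 : ∀ I, 0 ≤ f I) (m n : ℕ) (I : List A) : 0 ≤ fmn f m n I :=
  Finset.sum_nonneg fun _ _ => Finset.sum_nonneg fun _ _ => h0 _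

lemma IsWordDistribution.fmn_le_one (hf : IsWordDistribution f) (m n : ℕ) (I : List A) :
    fmn f m n I ≤ 1 := by
  rw [← hf.wordSum_eq_one (m + I.length + n), wordSum_add, wordSum_add]
  exact wordSum_le_wordSum fun u =>
    le_wordSum_length I (g := fun w => wordSum n fun v => f (u ++ w ++ v))
      fun _ => wordSum_nonneg fun _ => hf.nonneg _

lemma IsWordDistribution.fmn_le_fstar (hf : IsWordDistribution f) (m n : ℕ) (I : List A) :
    fmn f m n I ≤ fstar f I := by
  have bdd_inner (m : ℕ) : BddAbove (Set.range fun n => fmn f m n I) :=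
    ⟨1, Set.forall_mem_range.2 fun n => hf.fmn_le_one m n I⟩
  have bdd_outer : BddAbove (Set.range fun m => ⨆ n, fmn f m n I) :=
    ⟨1, Set.forall_mem_range.2 fun m => ciSup_le fun n => hf.fmn_le_one m n I⟩
  exact (le_ciSup (bdd_inner m) n).trans (le_ciSup bdd_outer m)

lemma fstar_nonneg (h0 : ∀ I, 0 ≤ f I) (I : List A) : 0 ≤ fstar f I :=
  Real.iSup_nonneg fun m => Real.iSup_nonneg fun n => fmn_nonneg h0 m n I

lemma exists_lt_fmn_of_lt_fstar {t : ℝ} {I : List A} (h : t < fstar f I) :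
    ∃ m n, t < fmn f m n I := by
  obtain ⟨m, hm⟩ := exists_lt_of_lt_ciSup h
  exact ⟨m, exists_lt_of_lt_ciSup hm⟩

lemma exists_half_fstar_le_fmn (h0 : ∀ I, 0 ≤ f I) (I : List A) :
    ∃ m n, fstar f I / 2 ≤ fmn f m n I := by
  rcases (fstar_nonneg h0 I).eq_or_lt with h | h
  · exact ⟨0, 0, by simpa only [← h, zero_div] using fmn_nonneg h0 0 0 I⟩
  · obtain ⟨m, n, hmn⟩ := exists_lt_fmn_of_lt_fstar (half_lt_self h)
    exact ⟨m, n, hmn.le⟩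

lemma mul_fmn_le_fmn_add {D : ℝ} {k : ℕ} (h : ∀ I, D * f I ≤ wordSum k fun v => f (v ++ I))
    (m n : ℕ) (I : List A) : D * fmn f m n I ≤ fmn f (k + m) n I := by
  simp only [fmn_eq_wordSum, mul_wordSum]
  rw [wordSum_add, wordSum_comm k]
  refine wordSum_le_wordSum fun u => ?_
  rw [wordSum_comm k]
  refine wordSum_le_wordSum fun v => ?_
  simpa only [List.append_assoc] using h (u ++ I ++ v)

lemma LeftExtendable.exists_eventually_mul_fstar_le_fmn (hL : LeftExtendable f)
    (h0 : ∀ I, 0 ≤ f I) :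
    ∃ D > 0, ∀ I, ∃ n, ∀ᶠ m in atTop, D * fstar f I ≤ fmn f m n I := by
  obtain ⟨D, hD, hL⟩ := hL
  refine ⟨D / 2, half_pos hD, fun I => ?_⟩
  obtain ⟨m₀, n, hmn⟩ := exists_half_fstar_le_fmn h0 I
  refine ⟨n, ?_⟩
  rw [← map_add_atTop_eq_nat m₀, eventually_map]
  filter_upwards [hL] with k hk
  calc D / 2 * fstar f I = D * (fstar f I / 2) := by ring
    _ ≤ D * fmn f m₀ n I := mul_le_mul_of_nonneg_left hmn hD.le
    _ ≤ fmn f (k + m₀) n I := mul_fmn_le_fmn_add hk m₀ n I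

lemma wordSum_fmn_append (f : List A → ℝ) (m n a i b : ℕ) (I J : List A) :
    (wordSum (a + i + b) fun K => fmn f m n (I ++ K ++ J)) =
      wordSum m fun u => wordSum a fun s => wordSum b fun t => wordSum n fun v =>
        wordSum i fun K => f (u ++ I ++ s ++ K ++ (t ++ J ++ v)) := by
  simp only [fmn_eq_wordSum]
  rw [wordSum_comm]
  congr! 2 with u
  rw [add_assoc, wordSum_add]
  congr! 2 with s
  rw [wordSum_add, wordSum_comm]
  congr! 2 with t
  rw [wordSum_comm]
  simp only [List.append_assoc]

lemma mul_fmn_mul_fmn_le {c : ℝ}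
    (h : ∀ I J, c * (f I * f J) ≤ ∑ i ∈ P, wordSum i fun K => f (I ++ K ++ J))
    (m a b n : ℕ) (I J : List A) :
    c * (fmn f m a I * fmn f b n J) ≤
      ∑ i ∈ P, wordSum (a + i + b) fun K => fmn f m n (I ++ K ++ J) := by
  calc c * (fmn f m a I * fmn f b n J)
      = wordSum m fun u => wordSum a fun s => wordSum b fun t => wordSum n fun v =>
          c * (f (u ++ I ++ s) * f (t ++ J ++ v)) := by
        simp_rw [fmn_eq_wordSum, wordSum_mul, mul_wordSum]
    _ ≤ wordSum m fun u => wordSum a fun s => wordSum b fun t => wordSum n fun v =>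
          ∑ i ∈ P, wordSum i fun K => f (u ++ I ++ s ++ K ++ (t ++ J ++ v)) :=
        wordSum_le_wordSum fun u => wordSum_le_wordSum fun s => wordSum_le_wordSum fun t =>
          wordSum_le_wordSum fun v => h (u ++ I ++ s) (t ++ J ++ v)
    _ = ∑ i ∈ P, wordSum (a + i + b) fun K => fmn f m n (I ++ K ++ J) := by
        simp only [wordSum_fmn_append, wordSum_finsetSum]

theorem Bridging.exists_eventually_mul_fstar_le (hb : Bridging P f) (hf : IsWordDistribution f)
    (hL : LeftExtendable f) :
    ∃ C > 0, ∀ I J, ∀ᶠ n in atTop, C * (fstar f I * fstar f J) ≤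
      ∑ i ∈ P, wordSum (n + i) fun K => fstar f (I ++ K ++ J) := by
  obtain ⟨c, hc, hb⟩ := hb
  obtain ⟨D, hD, hL⟩ := hL.exists_eventually_mul_fstar_le_fmn hf.nonneg
  refine ⟨c * (D / 2), by positivity, fun I J => ?_⟩
  obtain ⟨m, a, hI⟩ := exists_half_fstar_le_fmn hf.nonneg I
  obtain ⟨n, hJ⟩ := hL J
  rw [← map_add_atTop_eq_nat a, eventually_map]
  filter_upwards [hJ] with b hb_le
  calc c * (D / 2) * (fstar f I * fstar f J)
      = c * (fstar f I / 2 * (D * fstar f J)) := by ring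
    _ ≤ c * (fmn f m a I * fmn f b n J) :=
      mul_le_mul_of_nonneg_left (mul_le_mul hI hb_le
        (mul_nonneg hD.le (fstar_nonneg hf.nonneg J)) (fmn_nonneg hf.nonneg m a I)) hc.le
    _ ≤ ∑ i ∈ P, wordSum (a + i + b) fun K => fmn f m n (I ++ K ++ J) :=
      mul_fmn_mul_fmn_le hb m a b n I J
    _ ≤ ∑ i ∈ P, wordSum (b + a + i) fun K => fstar f (I ++ K ++ J) :=
      Finset.sum_le_sum fun i _ => by
        rw [show a + i + b = b + a + i by lia]
        exact wordSum_le_wordSum fun _ => hf.fmn_le_fstar m n _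

end Fstar

section Omega

variable {A : Type} [Fintype A] {f : List A → ℝ} {p : ℕ}

lemma OmegaW.isWordDistribution (hf : OmegaW p f) : IsWordDistribution f := by
  obtain ⟨hf01, _, _, hsum, _⟩ := hf
  exact ⟨fun I => (hf01 I).1, hsum⟩

lemma OmegaW.bridging (hf : OmegaW p f) : Bridging (Finset.range (p + 1)) f := by
  refine bridging_of_exists hf.isWordDistribution.nonneg ?_
  obtain ⟨_, c, hc, _, hbridge, _⟩ := hf
  simpa only [Finset.mem_range_succ_iff] using ⟨c, hc, hbridge⟩

lemma OmegaW.leftExtendable (hf : OmegaW p f) : LeftExtendable f := by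
  refine hf.bridging.leftExtendable_of_exists_cons hf.isWordDistribution ?_
  obtain ⟨_, c, hc, _, _, hstep⟩ := hf
  exact ⟨c, hc, fun I => (hstep I).imp fun _ ⟨_, hi, _⟩ => hi⟩

lemma OmegaS.isWordDistribution (hf : OmegaS p f) : IsWordDistribution f := by
  obtain ⟨hf01, _, _, hsum, _⟩ := hf
  exact ⟨fun I => (hf01 I).1, hsum⟩

lemma OmegaS.bridging (hf : OmegaS p f) : Bridging {p} f := by
  refine bridging_of_exists hf.isWordDistribution.nonneg ?_
  obtain ⟨_, c, hc, _, hbridge⟩ := hf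
  simpa only [Finset.mem_singleton] using ⟨c, hc, hbridge⟩

lemma OmegaS.leftExtendable (hf : OmegaS p f) : LeftExtendable f :=
  hf.bridging.leftExtendable hf.isWordDistribution

end Omega

theorem weighted_eq_states_stmt_11_general {A : Type} [Fintype A] {p : ℕ} {f : List A → ℝ}
    (hf : IsWordDistribution f) (hL : LeftExtendable f)
    (hb : Bridging (Finset.range (p + 1)) f) :
    ∃ C > 0,
      (∀ I J, ∀ᶠ n in atTop, C * (fstar f I * fstar f J) ≤
        ∑ i ∈ Finset.range (p + 1), wordSum (n + i) fun K => fstar f (I ++ K ++ J)) ∧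
      (Bridging {p} f → ∀ I J, ∀ᶠ n in atTop, C * (fstar f I * fstar f J) ≤
        wordSum n fun K => fstar f (I ++ K ++ J)) := by
  by_cases hbp : Bridging {p} f
  · obtain ⟨C, hC, h⟩ := hbp.exists_eventually_mul_fstar_le hf hL
    have single : ∀ I J, ∀ᶠ n in atTop,
        C * (fstar f I * fstar f J) ≤ wordSum n fun K => fstar f (I ++ K ++ J) := fun I J => by
      rw [← map_add_atTop_eq_nat p, eventually_map]
      simpa only [Finset.sum_singleton] using h I J
    refine ⟨C, hC, fun I J => (single I J).mono fun n hn => hn.trans ?_, fun _ => single⟩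
    exact Finset.single_le_sum (f := fun i => wordSum (n + i) fun K => fstar f (I ++ K ++ J))
      (fun _ _ => wordSum_nonneg fun _ => fstar_nonneg hf.nonneg _)
      (Finset.mem_range.2 p.succ_pos)
  · obtain ⟨C, hC, h⟩ := hb.exists_eventually_mul_fstar_le hf hL
    exact ⟨C, hC, h, fun hbp' => absurd hbp' hbp⟩

/-- Lemma 4.4 / `lem-t2`: for `f ∈ Ω_w(A*,p) ∪ Ω(A*,p)` there is `C' > 0` so
that for all words `I, J` there is `N(I,J)` with
`Σ_{i=0}^p Σ_{K ∈ A^{n+i}} f*(IKJ) ≥ C' f*(I) f*(J)` for all `n ≥ N`; if moreover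
`f ∈ Ω(A*,p)` then `Σ_{K ∈ A^n} f*(IKJ) ≥ C' f*(I) f*(J)` for all `n ≥ N`. -/
theorem weighted_eq_states_stmt_11 {A : Type} [Fintype A]
    (p : ℕ) (f : List A → ℝ) (hf : OmegaW p f ∨ OmegaS p f) :
    ∃ C' > (0:ℝ),
      (∀ I J : List A, ∃ N : ℕ, ∀ n : ℕ, N ≤ n →
        C' * (fstar f I * fstar f J) ≤
          ∑ i ∈ Finset.range (p+1), ∑ K : Fin (n+i) → A,
            fstar f (I ++ List.ofFn K ++ J)) ∧
      (OmegaS p f → ∀ I J : List A, ∃ N : ℕ, ∀ n : ℕ, N ≤ n →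
        C' * (fstar f I * fstar f J) ≤
          ∑ K : Fin n → A, fstar f (I ++ List.ofFn K ++ J)) := by
  have hdist : IsWordDistribution f := hf.elim (·.isWordDistribution) (·.isWordDistribution)
  have hbridge : Bridging (Finset.range (p + 1)) f :=
    hf.elim (·.bridging) (·.bridging.mono hdist.nonneg (by simp))
  obtain ⟨C, hC, hw, hs⟩ := weighted_eq_states_stmt_11_general hdist
    (hf.elim (·.leftExtendable) (·.leftExtendable)) hbridge
  simp only [eventually_atTop] at hw hs
  exact ⟨C, hC, hw, fun h => hs h.bridging⟩
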